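/- A symmetric nonnegative matrix of order n ≤ 4 is completely positive if and only if it is positive semidefinite. -/

import Mathlib

/-- A real `n × n` matrix is completely positive if `C = B * Bᵀ` for some
entrywise nonnegative matrix `B`. -/
def IsCP {n : ℕ} (C : Matrix (Fin n) (Fin n) ℝ) : Prop :=
  ∃ (m : ℕ) (B : Matrix (Fin n) (Fin m) ℝ), (∀ i j, 0 ≤ B i j) ∧ C = B * B.transpose

open Matrix

namespace MaxfieldMinc

/-- Adding a nonnegative rank-one term preserves complete positivity. -/
lemma isCP_add {n : ℕ} {A : Matrix (Fin n) (Fin n) ℝ} (hA : IsCP A) (b : Fin n → ℝ)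
    (hb : ∀ i, 0 ≤ b i) : IsCP (A + vecMulVec b b) := by
  obtain ⟨m, B, hB, rfl⟩ := hA
  refine ⟨m + 1, Matrix.of fun i => Fin.cons (b i) (B i), ?_, ?_⟩
  · intro i j
    refine Fin.cases ?_ (fun k => ?_) j
    · simpa using hb i
    · simpa using hB i k
  · ext i j
    simp [Matrix.mul_apply, Fin.sum_univ_succ, vecMulVec_apply, add_comm]

lemma isCP_add_smul {n : ℕ} {A : Matrix (Fin n) (Fin n) ℝ} (hA : IsCP A) (b : Fin n → ℝ)
    (hb : ∀ i, 0 ≤ b i) {t : ℝ} (ht : 0 ≤ t) : IsCP (A + t • vecMulVec b b) := by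
  have h := isCP_add hA (fun i => √t * b i) (fun i => mul_nonneg (Real.sqrt_nonneg _) (hb i))
  convert h using 2
  ext i j
  simp only [Matrix.smul_apply, vecMulVec_apply, smul_eq_mul]
  have := Real.mul_self_sqrt ht
  linear_combination (-b i * b j) * this

lemma isCP_zero {n : ℕ} : IsCP (0 : Matrix (Fin n) (Fin n) ℝ) :=
  ⟨0, 0, by simp, by simp⟩

lemma psd_of_isCP {n : ℕ} {A : Matrix (Fin n) (Fin n) ℝ} (hA : IsCP A) : A.PosSemidef := by
  obtain ⟨m, B, -, rfl⟩ := hA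
  have := posSemidef_self_mul_conjTranspose B
  rwa [conjTranspose_eq_transpose_of_trivial] at this

lemma dot_symm {n : ℕ} {A : Matrix (Fin n) (Fin n) ℝ} (hA : A.PosSemidef) (x y : Fin n → ℝ) :
    x ⬝ᵥ (A *ᵥ y) = (A *ᵥ x) ⬝ᵥ y := by
  have hs : Aᵀ = A := by simpa [conjTranspose_eq_transpose_of_trivial] using hA.isHermitian.eq
  rw [dotProduct_mulVec, ← mulVec_transpose, hs]

lemma apply_symm {n : ℕ} {A : Matrix (Fin n) (Fin n) ℝ} (hA : A.PosSemidef) (i j : Fin n) :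
    A i j = A j i := by
  simpa using (hA.isHermitian.apply j i)

lemma vmv_mulVec {n : ℕ} (b x : Fin n → ℝ) :
    vecMulVec b b *ᵥ x = (b ⬝ᵥ x) • b := by
  ext i
  simp only [mulVec, dotProduct, vecMulVec_apply, Pi.smul_apply, smul_eq_mul, Finset.sum_mul]
  exact Finset.sum_congr rfl fun j _ => by ring

lemma psd_vmv {n : ℕ} (b : Fin n → ℝ) : (vecMulVec b b).PosSemidef := by
  simpa using posSemidef_vecMulVec_self_star b

/-- Rank reduction by subtracting a rank-one matrix built from a vector in the range. -/
lemma reduce {n : ℕ} {A : Matrix (Fin n) (Fin n) ℝ} (hA : A.PosSemidef) (y : Fin n → ℝ)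
    (hy : A *ᵥ y ≠ 0) :
    ∃ t : ℝ, 0 < t ∧ (A - t • vecMulVec (A *ᵥ y) (A *ᵥ y)).PosSemidef ∧
      (A - t • vecMulVec (A *ᵥ y) (A *ᵥ y)).rank < A.rank := by
  have hnn : ∀ x : Fin n → ℝ, 0 ≤ x ⬝ᵥ (A *ᵥ x) := fun x => by
    simpa using hA.dotProduct_mulVec_nonneg x
  have hq : 0 < y ⬝ᵥ (A *ᵥ y) := by
    refine lt_of_le_of_ne (hnn y) fun h => hy ?_
    exact (hA.dotProduct_mulVec_zero_iff y).1 (by simpa using h.symm)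
  set q := y ⬝ᵥ (A *ᵥ y) with hqdef
  set b := A *ᵥ y with hb
  have hmv : ∀ x, (A - q⁻¹ • vecMulVec b b) *ᵥ x = A *ᵥ x - (q⁻¹ * (b ⬝ᵥ x)) • b := fun x => by
    rw [sub_mulVec, smul_mulVec, vmv_mulVec, smul_smul]
  refine ⟨q⁻¹, inv_pos.2 hq, ?_, ?_⟩
  · refine PosSemidef.of_dotProduct_mulVec_nonneg ?_ ?_
    · exact hA.isHermitian.sub ((psd_vmv b).smul (inv_pos.2 hq).le).isHermitian
    · intro x
      simp only [star_trivial]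
      rw [hmv]
      have h := hnn (x - (q⁻¹ * (b ⬝ᵥ x)) • y)
      rw [mulVec_sub, mulVec_smul, ← hb, sub_dotProduct, smul_dotProduct, dotProduct_sub y,
        dotProduct_smul, ← hqdef, dot_symm hA y x, ← hb] at h
      simp only [smul_eq_mul] at h
      have : q⁻¹ * (b ⬝ᵥ x) * (b ⬝ᵥ x - q⁻¹ * (b ⬝ᵥ x) * q) = 0 := by field_simp; ring
      linarith
  · have h1 := (A.mulVecLin).finrank_range_add_finrank_ker
    have h2 := ((A - q⁻¹ • vecMulVec b b).mulVecLin).finrank_range_add_finrank_ker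
    have h3 : LinearMap.ker A.mulVecLin < LinearMap.ker (A - q⁻¹ • vecMulVec b b).mulVecLin := by
      refine (SetLike.lt_iff_le_and_exists).2 ⟨?_, y, ?_, ?_⟩
      · intro x hx
        simp only [LinearMap.mem_ker, mulVecLin_apply] at hx ⊢
        have : b ⬝ᵥ x = 0 := by rw [hb, ← dot_symm hA, hx, dotProduct_zero]
        rw [hmv, hx, this]; simp
      · simp only [LinearMap.mem_ker, mulVecLin_apply]
        rw [hmv, dotProduct_comm, ← hqdef, inv_mul_cancel₀ hq.ne', one_smul, ← hb, sub_self]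
      · simpa using hy
    have h4 := Submodule.finrank_lt_finrank_of_lt h3
    unfold Matrix.rank
    omega

lemma eq_zero_of_rank {n : ℕ} {A : Matrix (Fin n) (Fin n) ℝ} (h : A.rank = 0) : A = 0 := by
  unfold Matrix.rank at h
  rw [Submodule.finrank_eq_zero, LinearMap.range_eq_bot] at h
  exact (Matrix.toLin'.injective (by simpa [Matrix.toLin'_apply'] using h))

/-- One step of the Gram decomposition. -/
lemma split {n k : ℕ} {A : Matrix (Fin n) (Fin n) ℝ} (hA : A.PosSemidef) (hr : A.rank ≤ k + 1) :
    ∃ b : Fin n → ℝ, (A - vecMulVec b b).PosSemidef ∧ (A - vecMulVec b b).rank ≤ k := by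
  by_cases h : ∃ y, A *ᵥ y ≠ 0
  · obtain ⟨y, hy⟩ := h
    obtain ⟨t, ht, h1, h2⟩ := reduce hA y hy
    have : t • vecMulVec (A *ᵥ y) (A *ᵥ y) = vecMulVec (√t • (A *ᵥ y)) (√t • (A *ᵥ y)) := by
      ext i j
      simp only [Matrix.smul_apply, vecMulVec_apply, smul_eq_mul, Pi.smul_apply]
      have := Real.mul_self_sqrt ht.le
      linear_combination (-(A *ᵥ y) i * (A *ᵥ y) j) * this
    rw [this] at h1 h2
    exact ⟨_, h1, by omega⟩
  · push Not at h
    have : A = 0 := by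
      ext i j
      simpa using congrFun (h (Pi.single j 1)) i
    subst this
    exact ⟨0, by simpa using PosSemidef.zero, by simp⟩

/-- Two-dimensional nonnegative Gram matrices. -/
lemma exists_first {ι : Type*} (a c : ι → ℝ) (s : Finset ι) (hs : s.Nonempty)
    (hpos : ∀ i ∈ s, 0 < a i * a i + c i * c i)
    (hnn : ∀ i ∈ s, ∀ j ∈ s, 0 ≤ a i * a j + c i * c j) :
    ∃ p ∈ s, ∀ i ∈ s, 0 ≤ a p * c i - c p * a i := by
  classical
  induction hs using Finset.Nonempty.cons_induction with
  | singleton q => exact ⟨q, by simp, by simp [mul_comm]⟩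
  | cons q s hq hs ih =>
    obtain ⟨p, hp, h⟩ := ih (fun i hi => hpos i (by simp [hi]))
      (fun i hi j hj => hnn i (by simp [hi]) j (by simp [hj]))
    rcases le_total 0 (a p * c q - c p * a q) with h0 | h0
    · refine ⟨p, by simp [hp], fun i hi => ?_⟩
      rcases Finset.mem_cons.1 hi with rfl | hi
      · exact h0
      · exact h i hi
    · refine ⟨q, by simp, fun i hi => ?_⟩
      rcases Finset.mem_cons.1 hi with rfl | hi
      · linarith [mul_comm (a i) (c i)]
      · have h1 := h i hi
        have h2 := hpos p (by simp [hp])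
        have h3 := hnn p (by simp [hp]) i (by simp [hi])
        have h4 := hnn q (by simp) p (by simp [hp])
        have h5 : 0 ≤ (a p * a p + c p * c p) * (a q * c i - c q * a i) := by
          have e1 := mul_nonneg (neg_nonneg.2 h0) h3
          have e2 := mul_nonneg h4 h1
          linarith
        exact nonneg_of_mul_nonneg_right h5 h2

lemma cp_rank_two {n : ℕ} {A : Matrix (Fin n) (Fin n) ℝ} (hA : A.PosSemidef)
    (hnn : ∀ i j, 0 ≤ A i j) (hr : A.rank ≤ 2) : IsCP A := by
  classical
  obtain ⟨a, h1, h2⟩ := split (k := 1) hA hr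
  obtain ⟨c, h3, h4⟩ := split (k := 0) h1 h2
  have h5 := eq_zero_of_rank (Nat.le_zero.1 h4)
  have hAe : ∀ i j, A i j = a i * a j + c i * c j := fun i j => by
    have := congrFun (congrFun h5 i) j
    simp only [Matrix.sub_apply, vecMulVec_apply, Matrix.zero_apply] at this
    linarith
  let s : Finset (Fin n) := Finset.univ.filter fun i => 0 < a i * a i + c i * c i
  have hz : ∀ i, i ∉ s → a i = 0 ∧ c i = 0 := fun i hi => by
    have : ¬ 0 < a i * a i + c i * c i := by simpa [s] using hi
    constructor <;> nlinarith [mul_self_nonneg (a i), mul_self_nonneg (c i)]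
  rcases s.eq_empty_or_nonempty with hs | hs
  · have : A = 0 := by
      ext i j
      have := hz i (by simp [hs])
      simp [hAe, this.1, this.2]
    rw [this]; exact isCP_zero
  · obtain ⟨p, hp, h⟩ := exists_first a c s hs (fun i hi => by simpa [s] using hi)
      (fun i _ j _ => by rw [← hAe]; exact hnn i j)
    have hpp : 0 < a p * a p + c p * c p := by simpa [s] using hp
    have hcr : ∀ i, 0 ≤ a p * c i - c p * a i := fun i => by
      by_cases hi : i ∈ s
      · exact h i hi
      · simp [hz i hi]
    have key : A = (0 + (a p * a p + c p * c p)⁻¹ • vecMulVec (fun i => A p i) (fun i => A p i)) +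
        (a p * a p + c p * c p)⁻¹ • vecMulVec (fun i => a p * c i - c p * a i)
          (fun i => a p * c i - c p * a i) := by
      ext i j
      simp only [Matrix.add_apply, Matrix.smul_apply, vecMulVec_apply, smul_eq_mul, Matrix.zero_apply, hAe]
      have hinv := inv_mul_cancel₀ hpp.ne'
      linear_combination (-(a i * a j + c i * c j)) * hinv
    rw [key]
    exact isCP_add_smul (isCP_add_smul isCP_zero _ (fun i => hnn p i) (inv_pos.2 hpp).le) _ hcr
      (inv_pos.2 hpp).le

lemma diag_pos {n : ℕ} {A : Matrix (Fin n) (Fin n) ℝ} (hA : A.PosSemidef) {i j : Fin n}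
    (h : A i j ≠ 0) : 0 < A i i := by
  refine lt_of_le_of_ne hA.diag_nonneg fun h0 => h ?_
  have : A *ᵥ Pi.single i 1 = 0 := by
    rw [← hA.dotProduct_mulVec_zero_iff]
    simp [← h0]
  have := congrFun this j
  rw [apply_symm hA]
  simpa using this

/-- The choice of a nonnegative vector orthogonal to the kernel and supported on a clique. -/
lemma choose_vec {n : ℕ} {A : Matrix (Fin n) (Fin n) ℝ} (hA : A.PosSemidef)
    (hnn : ∀ i j, 0 ≤ A i j) (hA0 : A ≠ 0) (x : Fin n → ℝ) (hx : A *ᵥ x = 0) :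
    ∃ b : Fin n → ℝ, (∀ i, 0 ≤ b i) ∧ b ≠ 0 ∧ x ⬝ᵥ b = 0 ∧
      ∀ i j, b i * b j ≠ 0 → A i j ≠ 0 := by
  by_cases h1 : ∃ i, x i = 0 ∧ A i i ≠ 0
  · obtain ⟨i, hi, hii⟩ := h1
    refine ⟨Pi.single i 1, fun k => ?_, by simp, by simp [hi], fun k l hkl => ?_⟩
    · by_cases hk : k = i
      · subst hk; simp
      · simp [hk]
    · have hk : k = i := by by_contra hk; simp [hk] at hkl
      have hl : l = i := by by_contra hl; simp [hl] at hkl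
      subst hk; subst hl; exact hii
  by_cases h2 : ∃ i j, x i * x j < 0 ∧ A i j ≠ 0
  · obtain ⟨i, j, hij, haij⟩ := h2
    have hne : i ≠ j := fun h => by subst h; nlinarith [mul_self_nonneg (x i)]
    have hi0 : x i ≠ 0 := fun h => by simp [h] at hij
    have hj0 : x j ≠ 0 := fun h => by simp [h] at hij
    refine ⟨Pi.single i |x j| + Pi.single j |x i|, fun k => ?_, ?_, ?_, fun k l hkl => ?_⟩
    · simp only [Pi.add_apply, Pi.single_apply]
      split_ifs <;> positivity
    · intro h
      have := congrFun h i
      simp [hne, hj0] at this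
    · rw [dotProduct_add, dotProduct_single, dotProduct_single]
      rcases mul_neg_iff.1 hij with ⟨h, h'⟩ | ⟨h, h'⟩
      · rw [abs_of_pos h, abs_of_neg h']; ring
      · rw [abs_of_neg h, abs_of_pos h']; ring
    · have haji : A j i ≠ 0 := by rwa [apply_symm hA]
      have aux : ∀ k, (Pi.single i |x j| + Pi.single j |x i| : Fin n → ℝ) k ≠ 0 → k = i ∨ k = j := by
        intro k hk
        by_contra hc
        push Not at hc
        simp [hc.1, hc.2] at hk
      rcases aux k (left_ne_zero_of_mul hkl) with rfl | rfl <;>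
        rcases aux l (right_ne_zero_of_mul hkl) with rfl | rfl
      · exact (diag_pos hA haij).ne'
      · exact haij
      · exact haji
      · exact (diag_pos hA haji).ne'
  exfalso
  push Not at h1 h2
  have hterm : ∀ i j, 0 ≤ x i * (A i j * x j) := fun i j => by
    rcases lt_or_ge (x i * x j) 0 with h | h
    · simp [h2 i j h]
    · have := mul_nonneg (hnn i j) h
      linarith
  have hsum : ∑ i, ∑ j, x i * (A i j * x j) = 0 := by
    have : x ⬝ᵥ (A *ᵥ x) = 0 := by rw [hx, dotProduct_zero]
    simpa [dotProduct, mulVec, Finset.mul_sum] using this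
  have hd : ∀ i, A i i = 0 := fun i => by
    have e1 := (Finset.sum_eq_zero_iff_of_nonneg
      (fun i _ => Finset.sum_nonneg fun j _ => hterm i j)).1 hsum i (Finset.mem_univ i)
    have e2 := (Finset.sum_eq_zero_iff_of_nonneg (fun j _ => hterm i j)).1 e1 i (Finset.mem_univ i)
    by_contra hc
    have hxi : x i ≠ 0 := fun h => hc (h1 i h)
    simp [hc, hxi] at e2
  apply hA0
  rw [← hA.trace_eq_zero_iff]
  simp [Matrix.trace, hd]

/-- In corank one, the range is the orthogonal complement of a kernel vector. -/
lemma mem_range {n : ℕ} {A : Matrix (Fin n) (Fin n) ℝ} (hA : A.PosSemidef)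
    (hr : n ≤ A.rank + 1) (x : Fin n → ℝ) (hx0 : x ≠ 0) (hx : A *ᵥ x = 0)
    (b : Fin n → ℝ) (hb : x ⬝ᵥ b = 0) : ∃ y, A *ᵥ y = b := by
  let f : Module.Dual ℝ (Fin n → ℝ) := dotProductBilin ℝ ℝ x
  have hf : ∀ z, f z = x ⬝ᵥ z := fun z => rfl
  have hf0 : f ≠ 0 := fun h => hx0 <| by
    have := hf x
    rw [h] at this
    exact dotProduct_self_eq_zero.1 this.symm
  have h1 := Module.Dual.finrank_ker_add_one_of_ne_zero hf0
  have h2 : LinearMap.range A.mulVecLin ≤ LinearMap.ker f := by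
    rintro _ ⟨y, rfl⟩
    rw [LinearMap.mem_ker, hf, mulVecLin_apply, dot_symm hA, hx, zero_dotProduct]
  have h3 : LinearMap.range A.mulVecLin = LinearMap.ker f := by
    apply Submodule.eq_of_le_of_finrank_le h2
    unfold Matrix.rank at hr
    simp at h1
    omega
  have : b ∈ LinearMap.range A.mulVecLin := by rw [h3, LinearMap.mem_ker, hf, hb]
  simpa using this

lemma rank_lt_of_ker {n : ℕ} {A : Matrix (Fin n) (Fin n) ℝ} (x : Fin n → ℝ) (hx0 : x ≠ 0)
    (hx : A *ᵥ x = 0) : A.rank + 1 ≤ n := by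
  have h1 := (A.mulVecLin).finrank_range_add_finrank_ker
  have h2 : LinearMap.ker A.mulVecLin ≠ ⊥ := fun h => hx0 <| by
    have : x ∈ LinearMap.ker A.mulVecLin := by simpa using hx
    simpa [h] using this
  have h3 := Submodule.one_le_finrank_iff.2 h2
  unfold Matrix.rank
  simp at h1
  omega

/-- The singular case. -/
lemma cp_singular {n : ℕ} (hn : n ≤ 4) (m : ℕ) : ∀ (A : Matrix (Fin n) (Fin n) ℝ)
    (_ : A.PosSemidef) (_ : ∀ i j, 0 ≤ A i j) (x : Fin n → ℝ) (_ : x ≠ 0) (_ : A *ᵥ x = 0)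
    (_ : (Finset.univ.filter fun p : Fin n × Fin n => A p.1 p.2 ≠ 0).card = m), IsCP A := by
  induction m using Nat.strong_induction_on with
  | _ m ih =>
  intro A hA hnn x hx0 hx hm
  have hrk := rank_lt_of_ker x hx0 hx
  by_cases hr : A.rank ≤ 2
  · exact cp_rank_two hA hnn hr
  have hA0 : A ≠ 0 := fun h => hr (by simp [h])
  obtain ⟨b, hb, hb0, hxb, hsupp⟩ := choose_vec hA hnn hA0 x hx
  obtain ⟨y, hy⟩ := mem_range hA (by omega) x hx0 hx b hxb
  obtain ⟨t₀, ht₀, hpsd, hlt⟩ := reduce hA y (by rwa [hy])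
  rw [hy] at hpsd hlt
  let s : Finset (Fin n × Fin n) := Finset.univ.filter fun p => b p.1 * b p.2 ≠ 0
  have hs : s.Nonempty := by
    obtain ⟨i, hi⟩ := Function.ne_iff.1 hb0
    exact ⟨(i, i), by simpa [s] using hi⟩
  obtain ⟨p, hp, hmin⟩ := s.exists_min_image (fun p => A p.1 p.2 / (b p.1 * b p.2)) hs
  have hbp : 0 < b p.1 * b p.2 :=
    lt_of_le_of_ne (mul_nonneg (hb _) (hb _)) (Ne.symm (by simpa only [s, Finset.mem_filter, Finset.mem_univ, true_and] using hp))
  set t₁ := A p.1 p.2 / (b p.1 * b p.2) with ht₁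
  have ht₁0 : 0 ≤ t₁ := div_nonneg (hnn _ _) hbp.le
  have hent : ∀ t ≤ t₁, ∀ i j, 0 ≤ (A - t • vecMulVec b b) i j := fun t ht i j => by
    simp only [Matrix.sub_apply, Matrix.smul_apply, vecMulVec_apply, smul_eq_mul, sub_nonneg]
    by_cases hij : b i * b j = 0
    · rw [hij, mul_zero]; exact hnn i j
    · have hpos : 0 < b i * b j := lt_of_le_of_ne (mul_nonneg (hb _) (hb _)) (Ne.symm hij)
      have := hmin (i, j) (by simpa only [s, Finset.mem_filter, Finset.mem_univ, true_and] using hij)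
      exact (le_div_iff₀ hpos).1 (ht.trans this)
  have hback : ∀ t : ℝ, A = (A - t • vecMulVec b b) + t • vecMulVec b b := fun t => by
    rw [sub_add_cancel]
  rcases le_total t₀ t₁ with hle | hle
  · rw [hback t₀]
    exact isCP_add_smul (cp_rank_two hpsd (hent _ hle) (by omega)) b hb ht₀.le
  · rw [hback t₁]
    refine isCP_add_smul (ih _ ?_ _ ?_ (hent _ le_rfl) x hx0 ?_ rfl) b hb ht₁0
    · rw [← hm]
      apply Finset.card_lt_card
      rw [Finset.ssubset_iff_of_subset]
      · refine ⟨p, ?_, ?_⟩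
        · simpa using hsupp p.1 p.2 hbp.ne'
        · simp only [Finset.mem_filter, Finset.mem_univ, true_and, not_not, Matrix.sub_apply, Matrix.smul_apply,
            vecMulVec_apply, smul_eq_mul, ht₁]
          rw [div_mul_cancel₀ _ hbp.ne', sub_self]
      · intro q hq
        replace hq := (Finset.mem_filter.1 hq).2
        simp only [Finset.mem_filter, Finset.mem_univ, true_and, Matrix.sub_apply, Matrix.smul_apply,
            vecMulVec_apply, smul_eq_mul] at hq ⊢
        by_cases hqq : b q.1 * b q.2 = 0
        · rwa [hqq, mul_zero, sub_zero] at hq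
        · exact hsupp _ _ hqq
    · have : A - t₁ • vecMulVec b b = (A - t₀ • vecMulVec b b) + (t₀ - t₁) • vecMulVec b b := by
        rw [sub_smul]; abel
      rw [this]
      exact hpsd.add ((psd_vmv b).smul (sub_nonneg.2 hle))
    · rw [sub_mulVec, smul_mulVec, vmv_mulVec, hx, dotProduct_comm, hxb]
      simp

lemma cp_of_det_zero {n : ℕ} (hn : n ≤ 4) {A : Matrix (Fin n) (Fin n) ℝ}
    (hA : A.PosSemidef) (hnn : ∀ i j, 0 ≤ A i j) (hd : A.det = 0) : IsCP A := by
  obtain ⟨x, hx0, hx⟩ := exists_mulVec_eq_zero_iff.2 hd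
  exact cp_singular hn _ A hA hnn x hx0 hx rfl

lemma cp_of_psd {n : ℕ} (hn : n ≤ 4) {A : Matrix (Fin n) (Fin n) ℝ}
    (hA : A.PosSemidef) (hnn : ∀ i j, 0 ≤ A i j) : IsCP A := by
  by_cases hd : A.det = 0
  · exact cp_of_det_zero hn hA hnn hd
  rcases n with _ | n
  · rw [Subsingleton.elim A 0]; exact isCP_zero
  let b : Fin (n + 1) → ℝ := Pi.single 0 1
  have hb : ∀ i, 0 ≤ b i := fun i => by
    by_cases h : i = 0
    · subst h; simp [b]
    · simp [b, h]
  have hy : A *ᵥ (A⁻¹ *ᵥ b) = b := by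
    rw [mulVec_mulVec, mul_nonsing_inv _ (isUnit_iff_ne_zero.2 hd), one_mulVec]
  obtain ⟨t, ht, hpsd, hlt⟩ := reduce hA (A⁻¹ *ᵥ b) (by rw [hy]; simp [b])
  rw [hy] at hpsd hlt
  have : A = (A - t • vecMulVec b b) + t • vecMulVec b b := by rw [sub_add_cancel]
  rw [this]
  refine isCP_add_smul (cp_of_det_zero hn hpsd ?_ ?_) b hb ht.le
  · intro i j
    by_cases hij : i = j
    · subst hij; exact hpsd.diag_nonneg
    · have : b i * b j = 0 := by
        by_cases h : i = 0
        · subst h; simp [b, Ne.symm hij]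
        · simp [b, h]
      simp only [Matrix.sub_apply, Matrix.smul_apply, vecMulVec_apply, smul_eq_mul, this, mul_zero, sub_zero]
      exact hnn i j
  · by_contra h
    have h1 := rank_of_det_ne_zero (A := A - t • vecMulVec b b) h
    have h2 := A.rank_le_card_width
    omega

end MaxfieldMinc

/-- Maxfield–Minc: a symmetric entrywise nonnegative matrix of order `n ≤ 4`
is completely positive if and only if it is positive semidefinite. -/
theorem cp_iff_psd_of_order_le_four {n : ℕ} (hn : n ≤ 4)
    (C : Matrix (Fin n) (Fin n) ℝ) (hsym : C.IsSymm) (hnn : ∀ i j, 0 ≤ C i j) :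
    IsCP C ↔ C.PosSemidef :=
  ⟨MaxfieldMinc.psd_of_isCP, fun h => MaxfieldMinc.cp_of_psd hn h hnn⟩
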